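/- Let $P \subset \mathbb{R}^d$ be a centrally symmetric polytope, that is, the convex hull of finitely many points with $P = -P$, and let $u$ and $v$ be vertices of $P$ (possibly $u = v$). Write $P + u = \{x + u : x \in P\}$. A face of $P$ is the intersection of $P$ with a supporting hyperplane of $P$, and an edge of $P$ is a face of dimension $1$ (so for $d = 1$ the segment $P$ is not an edge of itself). If the interiors in $\mathbb{R}^d$ of the translates $P + u$ and $P + v$ intersect, then the segment $[u, -v]$ is not an edge of $P$. -/

import Mathlib

open scoped Pointwise

/-- A centrally symmetric polytope in `ℝ^d`: the convex hull of a finite set of points,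
with `P = -P`. -/
def IsCSPolytope {d : ℕ} (P : Set (EuclideanSpace ℝ (Fin d))) : Prop :=
  (∃ V : Finset (EuclideanSpace ℝ (Fin d)),
    P = convexHull ℝ (V : Set (EuclideanSpace ℝ (Fin d)))) ∧
  P = -P

/-- `H` is a supporting hyperplane of `P`: a hyperplane `{x | ⟪a, x⟫ = c}` with normal vector
`a ≠ 0` that meets `P` and has `P` on one side. -/
def IsSupportingHyperplane {d : ℕ} (P H : Set (EuclideanSpace ℝ (Fin d))) : Prop :=
  ∃ (a : EuclideanSpace ℝ (Fin d)) (c : ℝ), a ≠ 0 ∧ H = {x | inner ℝ a x = c} ∧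
    (∀ x ∈ P, inner ℝ a x ≤ c) ∧ (P ∩ H).Nonempty

/-- A face of `P` is the intersection of `P` with a supporting hyperplane. In particular `P` is
not a face of itself unless it lies in a hyperplane. -/
def IsFace {d : ℕ} (P F : Set (EuclideanSpace ℝ (Fin d))) : Prop :=
  ∃ H : Set (EuclideanSpace ℝ (Fin d)), IsSupportingHyperplane P H ∧ F = P ∩ H

/-- An edge of `P` is a face of (affine) dimension one. -/
def IsEdge {d : ℕ} (P F : Set (EuclideanSpace ℝ (Fin d))) : Prop :=
  IsFace P F ∧ Module.finrank ℝ (vectorSpan ℝ F) = 1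

/-!
A functional `f` defining the edge `[u, -v]` attains its maximum over `P` at `u` and at `-v`. Since
`P = -P`, its minimum over `P` is `-f u`, so `f` is nonnegative on `P + u` and nonpositive on
`P + v`. As `f` is an open map, it is even negative on the interior of `P + v`, which therefore
misses `P + u`.
-/

theorem IsFace.exists_forall_isMaxOn {d : ℕ} {P F : Set (EuclideanSpace ℝ (Fin d))}
    (hF : IsFace P F) :
    ∃ f : StrongDual ℝ (EuclideanSpace ℝ (Fin d)), f ≠ 0 ∧ ∀ x ∈ F, IsMaxOn f P x := by
  obtain ⟨_, ⟨a, c, ha, rfl, hle, -⟩, rfl⟩ := hF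
  refine ⟨innerSL ℝ a, fun h => ha (innerSL_inj.1 (h.trans (map_zero (innerSL ℝ)).symm)), ?_⟩
  rintro x ⟨-, hx : inner ℝ a x = c⟩ y hy
  exact (hle y hy).trans_eq hx.symm

section Separation

variable {𝕜 E : Type*} [Field 𝕜] [LinearOrder 𝕜] [IsStrictOrderedRing 𝕜] [TopologicalSpace 𝕜]
  [OrderTopology 𝕜] [AddCommGroup E] [TopologicalSpace E] [ContinuousAdd E] [Module 𝕜 E]
  [ContinuousSMul 𝕜 E] {f : StrongDual 𝕜 E}

theorem interior_subset_preimage_Iio (hf : f ≠ 0) {s : Set E} {c : 𝕜} (hs : ∀ x ∈ s, f x ≤ c) :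
    interior s ⊆ f ⁻¹' Set.Iio c := calc
  interior s ⊆ interior (f ⁻¹' Set.Iic c) := interior_mono hs
  _ ⊆ f ⁻¹' interior (Set.Iic c) :=
    (f.isOpenMap_of_ne_zero hf).interior_preimage_subset_preimage_interior
  _ = f ⁻¹' Set.Iio c := by rw [interior_Iic]

theorem disjoint_interior_of_forall_ge_of_forall_le (hf : f ≠ 0) {s t : Set E} {c : 𝕜}
    (hs : ∀ x ∈ s, c ≤ f x) (ht : ∀ x ∈ t, f x ≤ c) : Disjoint s (interior t) :=
  Set.disjoint_left.2 fun x hxs hxt =>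
    (hs x hxs).not_gt (interior_subset_preimage_Iio hf ht hxt)

theorem stmt_6_general (hf : f ≠ 0) {P : Set E} (hP : P = -P) {u v : E}
    (hu : IsMaxOn f P u) (hv : IsMaxOn f P (-v)) :
    Disjoint ((· + u) '' P) (interior ((· + v) '' P)) := by
  have nonneg_on_add_u : ∀ y ∈ (· + u) '' P, 0 ≤ f y := by
    rintro _ ⟨x, hx, rfl⟩
    have hx_neg : -x ∈ P := Set.mem_neg.1 (hP ▸ hx)
    have hle : -f x ≤ f u := map_neg f x ▸ hu hx_neg
    rw [map_add]
    exact neg_le_iff_add_nonneg'.1 hle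
  have nonpos_on_add_v : ∀ y ∈ (· + v) '' P, f y ≤ 0 := by
    rintro _ ⟨x, hx, rfl⟩
    have hle : f x ≤ -f v := map_neg f v ▸ hv hx
    rw [map_add]
    exact le_neg_iff_add_nonpos_right.1 hle
  exact disjoint_interior_of_forall_ge_of_forall_le hf nonneg_on_add_u nonpos_on_add_v

end Separation

/-- If `u, v` are vertices of a centrally symmetric polytope `P` and the interiors of the
translates `P + u` and `P + v` intersect, then `[u, -v]` is not an edge of `P`. -/
theorem stmt_6 (d : ℕ) (P : Set (EuclideanSpace ℝ (Fin d))) (hP : IsCSPolytope P)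
    (u v : EuclideanSpace ℝ (Fin d))
    (hu : u ∈ Set.extremePoints ℝ P) (hv : v ∈ Set.extremePoints ℝ P)
    (hint : (interior ((· + u) '' P) ∩ interior ((· + v) '' P)).Nonempty) :
    ¬ IsEdge P (segment ℝ u (-v)) := by
  intro hE
  obtain ⟨f, hf, hmax⟩ := hE.1.exists_forall_isMaxOn
  have hdisj := stmt_6_general hf hP.2 (hmax u (left_mem_segment ℝ u (-v)))
    (hmax (-v) (right_mem_segment ℝ u (-v)))
  exact Set.not_disjoint_iff_nonempty_inter.2 hint (hdisj.mono_left interior_subset)
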